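/- Let γ : ℝ → (Fin 4 → ℝ) be any smooth injective curve in 4-dimensional Minkowski spacetime whose tangent is everywhere timelike: for all s, η₄(γ′(s), γ′(s)) > 0, where γ′(s) = deriv γ s. Then for every open set O ⊆ (Fin 4 → ℝ) containing the range of γ, there exists a field T : (Fin 4 → ℝ) → Matrix (Fin 4) (Fin 4) ℝ which is smooth (ContDiff ℝ ⊤), takes symmetric-matrix values at every point, has vanishing coordinate divergence (for every p and every b, ∑ a, fderiv ℝ (fun q => T q a b) p (Pi.single a 1) = 0), has support contained in O (the closure of {p | T p ≠ 0} is contained in O), and is nonzero at at least one point of O. -/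

import Mathlib

attribute [local instance] Matrix.normedAddCommGroup Matrix.normedSpace

/-- The Minkowski inner product on `ℝ⁴ = Fin 4 → ℝ` in inertial coordinates. -/
def η₄ (u v : Fin 4 → ℝ) : ℝ :=
  u 0 * v 0 - u 1 * v 1 - u 2 * v 2 - u 3 * v 3

/-!
For a scalar `f` and a constant skew matrix `A`, the symmetric tensor
`T a b = ∑ c d, A a c * A b d * ∂_c ∂_d f` is divergence-free, because `∑ a c, A a c * ∂_a ∂_c`
contracts a skew matrix with a symmetric one. Its support lies in that of `f`, so it suffices to let
`f` be a bump function supported in `O`. If `v` is a nonzero row of `A`, the corresponding diagonal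
entry of `T` is the second derivative of `f` along `v`; it cannot vanish identically, because a
compactly supported function whose derivative along `v` vanishes is constant on the lines parallel
to `v`, hence zero, and this applies first to the derivative of `f` along `v` and then to `f`.
-/

section SkewContraction

open Matrix

theorem sum_apply_single_row_eq_zero_of_transpose_eq_neg {ι R M : Type*} [Fintype ι]
    [DecidableEq ι] [CommRing R] [AddCommGroup M] [Module R M] [IsAddTorsionFree M]
    {A : Matrix ι ι R} (hA : Aᵀ = -A)
    (B : (ι → R) →ₗ[R] (ι → R) →ₗ[R] M) (hB : ∀ u v, B u v = B v u) :
    ∑ a, B (Pi.single a 1) (A a) = 0 := by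
  have hskew (a c : ι) : A c a = -A a c := congrFun₂ hA a c
  have hexpand : ∑ a, B (Pi.single a 1) (A a) =
      ∑ a, ∑ c, A a c • B (Pi.single a 1) (Pi.single c 1) := by
    refine Finset.sum_congr rfl fun a _ => ?_
    conv_lhs => rw [pi_eq_sum_univ' (A a)]
    simp only [map_sum, map_smul]
  refine self_eq_neg.mp ?_
  calc ∑ a, B (Pi.single a 1) (A a)
      = ∑ a, ∑ c, A c a • B (Pi.single c 1) (Pi.single a 1) := by rw [hexpand, Finset.sum_comm]
    _ = ∑ a, ∑ c, -(A a c • B (Pi.single a 1) (Pi.single c 1)) := by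
      refine Finset.sum_congr rfl fun a _ => Finset.sum_congr rfl fun c _ => ?_
      rw [hskew, neg_smul, hB]
    _ = -∑ a, B (Pi.single a 1) (A a) := by simp only [hexpand, Finset.sum_neg_distrib]

theorem exists_transpose_eq_neg_ne_zero (ι R : Type*) [Nontrivial ι] [Ring R] [Nontrivial R] :
    ∃ A : Matrix ι ι R, Aᵀ = -A ∧ A ≠ 0 := by
  classical
  obtain ⟨i, j, hij⟩ := exists_pair_ne ι
  refine ⟨single i j 1 - single j i 1, by simp, fun h => ?_⟩
  simpa [hij] using congrFun₂ h i j

end SkewContraction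

section FDeriv

variable {𝕜 E F : Type*} [NormedAddCommGroup E] [NormedAddCommGroup F]

theorem fderiv_fderiv_apply_const [NontriviallyNormedField 𝕜] [NormedSpace 𝕜 E]
    [NormedSpace 𝕜 F] {f : E → F} {x : E} (hf : DifferentiableAt 𝕜 (fderiv 𝕜 f) x) (u v : E) :
    fderiv 𝕜 (fun y => fderiv 𝕜 f y v) x u = fderiv 𝕜 (fderiv 𝕜 f) x u v := by
  simp [fderiv_clm_apply hf (differentiableAt_const v)]

variable [RCLike 𝕜] [NormedSpace 𝕜 E] [NormedSpace 𝕜 F] {f : E → F} {v : E}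

theorem apply_add_smul_eq_of_fderiv_apply_eq_zero (hf : Differentiable 𝕜 f)
    (h : ∀ x, fderiv 𝕜 f x v = 0) (x : E) (t : 𝕜) : f (x + t • v) = f x := by
  have hline (s : 𝕜) : HasDerivAt (fun s : 𝕜 => f (x + s • v)) 0 s := by
    have hpath : HasDerivAt (fun s : 𝕜 => x + s • v) v s := by
      simpa using ((hasDerivAt_id s).smul_const v).const_add x
    simpa only [h, Function.comp_def] using
      (hf (x + s • v)).hasFDerivAt.comp_hasDerivAt s hpath
  simpa using is_const_of_deriv_eq_zero (fun s => (hline s).differentiableAt)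
    (fun s => (hline s).deriv) t 0

theorem eq_zero_of_hasCompactSupport_of_fderiv_apply_eq_zero (hf : Differentiable 𝕜 f)
    (hc : HasCompactSupport f) (hv : v ≠ 0) (h : ∀ x, fderiv 𝕜 f x v = 0) : f = 0 := by
  funext x
  have hline : HasCompactSupport fun t : 𝕜 => f (x + t • v) :=
    hc.comp_isClosedEmbedding <|
      (Homeomorph.addLeft x).isClosedEmbedding.comp (isClosedEmbedding_smul_left hv)
  obtain ⟨t, ht⟩ := (Set.ne_univ_iff_exists_notMem _).mp hline.isCompact.ne_univ
  rw [← apply_add_smul_eq_of_fderiv_apply_eq_zero hf h x t]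
  exact image_eq_zero_of_notMem_tsupport (f := fun t : 𝕜 => f (x + t • v)) ht

theorem eq_zero_of_hasCompactSupport_of_fderiv_fderiv_apply_eq_zero (hf : ContDiff 𝕜 2 f)
    (hc : HasCompactSupport f) (hv : v ≠ 0) (h : ∀ x, fderiv 𝕜 (fderiv 𝕜 f) x v v = 0) :
    f = 0 := by
  have hdf : Differentiable 𝕜 (fderiv 𝕜 f) :=
    (hf.fderiv_right (m := 1) (by norm_num)).differentiable one_ne_zero
  have hfirst : (fderiv 𝕜 f · v) = 0 :=
    eq_zero_of_hasCompactSupport_of_fderiv_apply_eq_zero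
      (hdf.clm_apply (differentiable_const v)) (hc.fderiv_apply 𝕜 v) hv fun x => by
        rw [fderiv_fderiv_apply_const (hdf x), h]
  exact eq_zero_of_hasCompactSupport_of_fderiv_apply_eq_zero (hf.differentiable two_ne_zero)
    hc hv (congrFun hfirst)

end FDeriv

section ConjHessian

open Matrix

variable {ι : Type*}

theorem sum_fderiv_fderiv_apply_row_eq_zero [Fintype ι] [DecidableEq ι] {F : Type*}
    [NormedAddCommGroup F] [NormedSpace ℝ F] {A : Matrix ι ι ℝ} (hA : Aᵀ = -A)
    {g : (ι → ℝ) → F} {p : ι → ℝ} (hg : ContDiffAt ℝ 2 g p) :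
    ∑ a, fderiv ℝ (fun q => fderiv ℝ g q (A a)) p (Pi.single a 1) = 0 := by
  have hdg : DifferentiableAt ℝ (fderiv ℝ g) p :=
    (hg.fderiv_right (m := 1) (by norm_num)).differentiableAt one_ne_zero
  have hsymm : IsSymmSndFDerivAt ℝ g p := hg.isSymmSndFDerivAt (by simp)
  have : IsAddTorsionFree F := .of_isTorsionFree ℝ F
  simp only [fderiv_fderiv_apply_const hdg]
  exact sum_apply_single_row_eq_zero_of_transpose_eq_neg hA
    (fderiv ℝ (fderiv ℝ g) p).toLinearMap₁₂ hsymm.eq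

/-- The conjugated Hessian `A * D²f * Aᵀ`, that is, the tensor `A a c * A b d * ∂_c ∂_d f` summed
over `c` and `d`, with the rows of `A` as directions of differentiation. For skew `A` it is a
conserved stress-energy field with superpotential `A a c * A b d * f`. -/
noncomputable def conjHessian (A : Matrix ι ι ℝ) (f : (ι → ℝ) → ℝ) (p : ι → ℝ) :
    Matrix ι ι ℝ :=
  Matrix.of fun a b => fderiv ℝ (fderiv ℝ f) p (A a) (A b)

namespace conjHessian

variable {A : Matrix ι ι ℝ} {f : (ι → ℝ) → ℝ}

theorem tsupport_subset (A : Matrix ι ι ℝ) (f : (ι → ℝ) → ℝ) :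
    tsupport (conjHessian A f) ⊆ tsupport f :=
  calc tsupport (conjHessian A f)
      ⊆ tsupport (fderiv ℝ (fderiv ℝ f)) :=
        tsupport_comp_subset (g := fun B : (ι → ℝ) →L[ℝ] (ι → ℝ) →L[ℝ] ℝ =>
          Matrix.of fun a b => B (A a) (A b)) rfl _
    _ ⊆ tsupport (fderiv ℝ f) := tsupport_fderiv_subset ℝ
    _ ⊆ tsupport f := tsupport_fderiv_subset ℝ

variable [Fintype ι]

theorem contDiff {n : WithTop ℕ∞} (A : Matrix ι ι ℝ) (hf : ContDiff ℝ (n + 2) f) :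
    ContDiff ℝ n (conjHessian A f) := by
  have hfderiv : ContDiff ℝ (n + 1) (fderiv ℝ f) :=
    hf.fderiv_right (by rw [add_assoc, one_add_one_eq_two])
  exact contDiff_pi.mpr fun a => contDiff_pi.mpr fun b =>
    ((hfderiv.fderiv_right le_rfl).clm_apply contDiff_const).clm_apply contDiff_const

theorem isSymm (A : Matrix ι ι ℝ) (hf : ContDiff ℝ 2 f) (p : ι → ℝ) :
    (conjHessian A f p).IsSymm :=
  Matrix.IsSymm.ext fun a b => (hf.contDiffAt.isSymmSndFDerivAt (by simp)).eq (A b) (A a)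

theorem sum_fderiv_eq_zero [DecidableEq ι] (hA : Aᵀ = -A) (hf : ContDiff ℝ 3 f) (p : ι → ℝ)
    (b : ι) : ∑ a, fderiv ℝ (fun q => conjHessian A f q a b) p (Pi.single a 1) = 0 := by
  have hdf : ContDiff ℝ 2 (fderiv ℝ f) := hf.fderiv_right (by norm_num)
  have hentry (a : ι) : (fun q => conjHessian A f q a b) =
      fun q => fderiv ℝ (fun r => fderiv ℝ f r (A b)) q (A a) :=
    funext fun q => (fderiv_fderiv_apply_const (hdf.differentiable two_ne_zero q) _ _).symm
  simp only [hentry]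
  exact sum_fderiv_fderiv_apply_row_eq_zero hA (hdf.clm_apply contDiff_const).contDiffAt

theorem ne_zero (hA : A ≠ 0) (hf : ContDiff ℝ 2 f) (hc : HasCompactSupport f) (hf0 : f ≠ 0) :
    conjHessian A f ≠ 0 := by
  obtain ⟨a, ha⟩ := Function.ne_iff.mp hA
  exact fun h => hf0 <| eq_zero_of_hasCompactSupport_of_fderiv_fderiv_apply_eq_zero hf hc ha
    fun p => congrFun₂ (congrFun h p) a a

end conjHessian

end ConjHessian

theorem malament_no_energy_condition_general {ι : Type*} [Fintype ι] [DecidableEq ι]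
    [Nontrivial ι] {O : Set (ι → ℝ)} (hO : IsOpen O) (hne : O.Nonempty) :
    ∃ T : (ι → ℝ) → Matrix ι ι ℝ,
      ContDiff ℝ (⊤ : ℕ∞) T ∧
      (∀ p : ι → ℝ, (T p).IsSymm) ∧
      (∀ p : ι → ℝ, ∀ b : ι,
        ∑ a, fderiv ℝ (fun q => T q a b) p (Pi.single a 1) = 0) ∧
      closure {p : ι → ℝ | T p ≠ 0} ⊆ O ∧
      (∃ p ∈ O, T p ≠ 0) := by
  obtain ⟨x, hx⟩ := hne
  obtain ⟨A, hskew, hA⟩ := exists_transpose_eq_neg_ne_zero ι ℝ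
  obtain ⟨f, hfO, hfc, hf, -, hfx⟩ :=
    exists_contDiff_tsupport_subset (n := (⊤ : ℕ∞)) (hO.mem_nhds hx)
  have hf0 : f ≠ 0 := Function.ne_iff.mpr ⟨x, by simp [hfx]⟩
  have hsupp : tsupport (conjHessian A f) ⊆ O := (conjHessian.tsupport_subset A f).trans hfO
  obtain ⟨p, hp⟩ := Function.ne_iff.mp
    (conjHessian.ne_zero hA (contDiff_infty.mp hf 2) hfc hf0)
  exact ⟨conjHessian A f, conjHessian.contDiff A hf,
    conjHessian.isSymm A (contDiff_infty.mp hf 2),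
    conjHessian.sum_fderiv_eq_zero hskew (contDiff_infty.mp hf 3), hsupp,
    p, hsupp (subset_tsupport _ hp), hp⟩

/-- Malament's proposition (Theorem 2 of the paper) in coordinates: for any smooth
injective timelike curve in Minkowski spacetime and any open neighborhood `O` of its
range, there is a smooth symmetric field `T` satisfying conditions (2)–(4) of the
Geroch–Jang theorem (conservation, support in `O`, nonvanishing) relative to `O`. -/
theorem malament_no_energy_condition
    (γ : ℝ → (Fin 4 → ℝ)) (hγ : ContDiff ℝ (⊤ : ℕ∞) γ) (hinj : Function.Injective γ)
    (htimelike : ∀ s : ℝ, η₄ (deriv γ s) (deriv γ s) > 0)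
    (O : Set (Fin 4 → ℝ)) (hO : IsOpen O) (hrange : Set.range γ ⊆ O) :
    ∃ T : (Fin 4 → ℝ) → Matrix (Fin 4) (Fin 4) ℝ,
      ContDiff ℝ (⊤ : ℕ∞) T ∧
      (∀ p : Fin 4 → ℝ, (T p).IsSymm) ∧
      (∀ p : Fin 4 → ℝ, ∀ b : Fin 4,
        ∑ a, fderiv ℝ (fun q => T q a b) p (Pi.single a 1) = 0) ∧
      closure {p : Fin 4 → ℝ | T p ≠ 0} ⊆ O ∧
      (∃ p ∈ O, T p ≠ 0) := by
  exact malament_no_energy_condition_general hO ⟨γ 0, hrange (Set.mem_range_self 0)⟩
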